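/- Let k, ℓ be positive integers and c a nonnegative integer, and let σ be a permutation of a finite set of cardinality ℓ·c with cycle type (ℓ)^c. Then σ has a kth root (i.e., there exists a permutation τ of the same set with τ^k = σ) if and only if there exists a function x : G_k(ℓ) → ℕ with ∑_{g ∈ G_k(ℓ)} g·x(g) = c. -/

import Mathlib

open Finset

/-- Cycle lengths of a permutation, counting fixed points as cycles of length 1. -/
def fullCycleType {α : Type*} [Fintype α] [DecidableEq α] (σ : Equiv.Perm α) : Multiset ℕ :=
  σ.cycleType + Multiset.replicate (Fintype.card α - σ.support.card) 1

/-- `G_k(ℓ) = {g ≥ 1 : gcd(gℓ, k) = g}`; it is a finite set since each element divides `k`. -/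
def Gset (k ℓ : ℕ) : Set ℕ := {g | 1 ≤ g ∧ Nat.gcd (g * ℓ) k = g}

/-!
The cycles of `τ ^ k` inside a cycle of `τ` of length `n` all have length `n / gcd n k`, and this
is `ℓ` exactly when `n = ℓ * g` with `g ∈ Gset k ℓ`. Up to conjugation, then, a `k`th root of `σ` is
any permutation all of whose cycle lengths lie in `ℓ * Gset k ℓ`. Since the cycle lengths of a
permutation of `α` can be any positive integers with sum `Fintype.card α = ℓ * c`, such a
permutation exists exactly when `c` is a sum of elements of `Gset k ℓ`.
-/

lemma exists_pow_eq_iff_exists_isConj_pow {G : Type*} [Group G] {k : ℕ} {a : G} :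
    (∃ b : G, b ^ k = a) ↔ ∃ b : G, IsConj (b ^ k) a := by
  refine ⟨fun ⟨b, hb⟩ ↦ ⟨b, hb ▸ IsConj.refl _⟩, fun ⟨b, hb⟩ ↦ ?_⟩
  obtain ⟨d, hd⟩ := isConj_iff.1 hb
  exact ⟨d * b * d⁻¹, by rw [conj_pow, hd]⟩

lemma mem_closure_iff_exists_finsum_nsmul {M : Type*} [AddCommMonoid M] {s : Set M}
    (hs : s.Finite) {a : M} :
    a ∈ AddSubmonoid.closure s ↔ ∃ x : s → ℕ, ∑ᶠ g : s, x g • (g : M) = a := by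
  have := hs.fintype
  simp only [AddSubmonoid.mem_closure_iff_of_fintype, finsum_eq_sum_of_fintype, eq_comm]

lemma mul_mem_closure_image_mul_left_iff {R : Type*} [NonUnitalNonAssocSemiring R]
    [IsLeftCancelMulZero R] {a b : R} (ha : a ≠ 0) {s : Set R} :
    a * b ∈ AddSubmonoid.closure ((a * ·) '' s) ↔ b ∈ AddSubmonoid.closure s := by
  rw [← AddMonoidHom.coe_mulLeft, ← AddMonoidHom.map_mclosure,
    AddSubmonoid.mem_map_iff_mem (f := AddMonoidHom.mulLeft a) (mul_right_injective₀ ha)]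

lemma finite_Gset {k : ℕ} (hk : 0 < k) (ℓ : ℕ) : (Gset k ℓ).Finite :=
  (Set.finite_Iic k).subset fun g ⟨_, hg⟩ ↦ hg ▸ Nat.gcd_le_right (g * ℓ) hk

lemma div_gcd_eq_iff_mem_image_Gset {n : ℕ} (hn : 0 < n) (k ℓ : ℕ) :
    n / n.gcd k = ℓ ↔ n ∈ (ℓ * ·) '' Gset k ℓ := by
  have hgcd : 0 < n.gcd k := Nat.gcd_pos_of_pos_left k hn
  rw [Nat.div_eq_iff_eq_mul_left hgcd (Nat.gcd_dvd_left n k)]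
  constructor
  · intro h
    exact ⟨n.gcd k, ⟨hgcd, by rw [mul_comm, ← h]⟩, h.symm⟩
  · rintro ⟨g, ⟨_, hg⟩, rfl⟩
    simp only [mul_comm ℓ, hg]

section Perm

open Function

variable {α : Type*} [Fintype α] [DecidableEq α] {σ : Equiv.Perm α}

lemma card_support_cycleOf_eq_minimalPeriod {x : α} (hx : x ∈ σ.support) :
    #(σ.cycleOf x).support = minimalPeriod σ x := by
  have hσx : σ x ≠ x := Equiv.Perm.mem_support.1 hx
  have hcycle : (σ.cycleOf x).IsCycle := σ.isCycle_cycleOf hσx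
  have hx' : σ.cycleOf x x ≠ x := by rwa [Equiv.Perm.cycleOf_apply_self]
  refine Nat.dvd_right_iff_eq.1 fun n ↦ ?_
  rw [← hcycle.orderOf, orderOf_dvd_iff_pow_eq_one, hcycle.pow_eq_one_iff' hx',
    Equiv.Perm.cycleOf_pow_apply_self, ← isPeriodicPt_iff_minimalPeriod_dvd, IsPeriodicPt,
    IsFixedPt, Equiv.Perm.iterate_eq_pow]

lemma mem_cycleType_iff_exists_minimalPeriod {n : ℕ} :
    n ∈ σ.cycleType ↔ ∃ x ∈ σ.support, minimalPeriod σ x = n := by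
  simp only [Equiv.Perm.cycleType_def, Multiset.mem_map, Finset.mem_val, comp_apply]
  constructor
  · rintro ⟨ρ, hρ, rfl⟩
    obtain ⟨x, hx⟩ := (Equiv.Perm.mem_cycleFactorsFinset_iff.1 hρ).1.nonempty_support
    have hxσ : x ∈ σ.support := Equiv.Perm.mem_cycleFactorsFinset_support_le hρ hx
    exact ⟨x, hxσ, by
      rw [Equiv.Perm.cycle_is_cycleOf hx hρ, card_support_cycleOf_eq_minimalPeriod hxσ]⟩
  · rintro ⟨x, hx, rfl⟩
    exact ⟨σ.cycleOf x, Equiv.Perm.cycleOf_mem_cycleFactorsFinset_iff.2 hx,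
      card_support_cycleOf_eq_minimalPeriod hx⟩

lemma mem_fullCycleType_iff_exists_minimalPeriod {n : ℕ} :
    n ∈ fullCycleType σ ↔ ∃ x, minimalPeriod σ x = n := by
  have mem_fixed : n ∈ Multiset.replicate (Fintype.card α - #σ.support) 1 ↔
      ∃ x ∉ σ.support, minimalPeriod σ x = n := by
    have hperiod : ∀ x ∉ σ.support, minimalPeriod σ x = 1 := fun x hx ↦
      minimalPeriod_eq_one_iff_isFixedPt.2 (Equiv.Perm.notMem_support.1 hx)
    rw [Multiset.mem_replicate, ← card_compl, card_ne_zero]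
    constructor
    · rintro ⟨⟨x, hx⟩, rfl⟩
      exact ⟨x, mem_compl.1 hx, hperiod x (mem_compl.1 hx)⟩
    · rintro ⟨x, hx, rfl⟩
      exact ⟨⟨x, mem_compl.2 hx⟩, hperiod x hx⟩
  rw [fullCycleType, Multiset.mem_add, mem_cycleType_iff_exists_minimalPeriod, mem_fixed]
  grind

lemma forall_mem_fullCycleType {p : ℕ → Prop} :
    (∀ n ∈ fullCycleType σ, p n) ↔ ∀ x, p (minimalPeriod σ x) := by
  simp only [mem_fullCycleType_iff_exists_minimalPeriod, forall_exists_index,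
    forall_apply_eq_imp_iff]

lemma sum_fullCycleType (σ : Equiv.Perm α) : (fullCycleType σ).sum = Fintype.card α :=
  σ.partition.parts_sum

lemma isConj_iff_fullCycleType_eq {τ : Equiv.Perm α} :
    IsConj σ τ ↔ fullCycleType σ = fullCycleType τ :=
  Equiv.Perm.partition_eq_of_isConj.trans Nat.Partition.ext_iff

lemma exists_fullCycleType_eq {m : Multiset ℕ} (hsum : m.sum = Fintype.card α)
    (hpos : ∀ n ∈ m, 0 < n) : ∃ τ : Equiv.Perm α, fullCycleType τ = m := by
  obtain ⟨r, hr⟩ : ∃ r, m.filter (¬ 2 ≤ ·) = Multiset.replicate r 1 := by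
    refine ⟨_, Multiset.eq_replicate_card.2 fun n hn ↦ ?_⟩
    have n_pos : 0 < n := hpos n (Multiset.mem_of_mem_filter hn)
    have n_lt_two : ¬ 2 ≤ n := (Multiset.mem_filter.1 hn).2
    lia
  have hm : m.filter (2 ≤ ·) + Multiset.replicate r 1 = m := by
    rw [← hr, Multiset.filter_add_not]
  have hcard : (m.filter (2 ≤ ·)).sum + r = Fintype.card α := by
    rw [← hsum, ← congrArg Multiset.sum hm, Multiset.sum_add, Multiset.sum_replicate, smul_eq_mul,
      mul_one]
  obtain ⟨τ, hτ⟩ := (Equiv.Perm.exists_with_cycleType_iff α).2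
    ⟨Nat.le.intro hcard, fun _ ↦ Multiset.of_mem_filter⟩
  refine ⟨τ, ?_⟩
  rw [fullCycleType, ← Equiv.Perm.sum_cycleType, hτ, ← hcard, Nat.add_sub_cancel_left, hm]

lemma fullCycleType_eq_replicate_iff {ℓ c : ℕ} (hℓ : 0 < ℓ) (hcard : Fintype.card α = ℓ * c) :
    fullCycleType σ = Multiset.replicate c ℓ ↔ ∀ n ∈ fullCycleType σ, n = ℓ := by
  refine ⟨fun h n hn ↦ Multiset.eq_of_mem_replicate (h ▸ hn), fun h ↦ ?_⟩
  obtain ⟨d, hd⟩ : ∃ d, fullCycleType σ = Multiset.replicate d ℓ :=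
    ⟨_, Multiset.eq_replicate_card.2 h⟩
  have hsum : ℓ * d = ℓ * c := by
    rw [← hcard, ← sum_fullCycleType σ, hd, Multiset.sum_replicate, smul_eq_mul, mul_comm]
  rw [hd, Nat.eq_of_mul_eq_mul_left hℓ hsum]

lemma exists_forall_mem_fullCycleType_iff_card_mem_closure {S : Set ℕ} :
    (∃ τ : Equiv.Perm α, ∀ n ∈ fullCycleType τ, n ∈ S) ↔
      Fintype.card α ∈ AddSubmonoid.closure S := by
  constructor
  · rintro ⟨τ, hτ⟩
    rw [← sum_fullCycleType τ]
    exact AddSubmonoid.multiset_sum_mem _ _ fun n hn ↦ AddSubmonoid.subset_closure (hτ n hn)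
  · rw [← AddSubmonoid.closure_sdiff_singleton_zero]
    intro hcard
    obtain ⟨m, hm, hsum⟩ := AddSubmonoid.exists_multiset_of_mem_closure hcard
    obtain ⟨τ, rfl⟩ := exists_fullCycleType_eq hsum fun n hn ↦ Nat.pos_of_ne_zero (hm n hn).2
    exact ⟨τ, fun n hn ↦ (hm n hn).1⟩

lemma fullCycleType_pow_eq_replicate_iff {k ℓ c : ℕ} (hℓ : 0 < ℓ)
    (hcard : Fintype.card α = ℓ * c) :
    fullCycleType (σ ^ k) = Multiset.replicate c ℓ ↔
      ∀ n ∈ fullCycleType σ, n ∈ (ℓ * ·) '' Gset k ℓ := by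
  rw [fullCycleType_eq_replicate_iff hℓ hcard, forall_mem_fullCycleType, forall_mem_fullCycleType]
  refine forall_congr' fun x ↦ ?_
  have hx : x ∈ periodicPts σ := σ.injective.mem_periodicPts x
  rw [← Equiv.Perm.iterate_eq_pow, minimalPeriod_iterate_eq_div_gcd' hx,
    div_gcd_eq_iff_mem_image_Gset (minimalPeriod_pos_of_mem_periodicPts hx)]

end Perm

/-- **Proposition (coro-sol).** Let `k, ℓ` be positive integers, `c ≥ 0`, and `σ` a
permutation of a set of cardinality `ℓ·c` with cycle type `(ℓ)^c`. Then `σ` has a `k`th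
root if and only if there is `x : G_k(ℓ) → ℕ` with `∑_{g ∈ G_k(ℓ)} g·x(g) = c`. -/
theorem has_root_iff_exists_solution {α : Type*} [Fintype α] [DecidableEq α]
    (k ℓ : ℕ) (hk : 0 < k) (hℓ : 0 < ℓ) (c : ℕ)
    (hcard : Fintype.card α = ℓ * c)
    (σ : Equiv.Perm α) (hσ : fullCycleType σ = Multiset.replicate c ℓ) :
    (∃ τ : Equiv.Perm α, τ ^ k = σ) ↔
      ∃ x : Gset k ℓ → ℕ, (∑ᶠ g : Gset k ℓ, (g : ℕ) * x g) = c := by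
  calc (∃ τ : Equiv.Perm α, τ ^ k = σ)
    _ ↔ ∃ τ : Equiv.Perm α, fullCycleType (τ ^ k) = Multiset.replicate c ℓ := by
      simp only [exists_pow_eq_iff_exists_isConj_pow, isConj_iff_fullCycleType_eq, hσ]
    _ ↔ ∃ τ : Equiv.Perm α, ∀ n ∈ fullCycleType τ, n ∈ (ℓ * ·) '' Gset k ℓ := by
      simp only [fullCycleType_pow_eq_replicate_iff hℓ hcard]
    _ ↔ c ∈ AddSubmonoid.closure (Gset k ℓ) := by
      rw [exists_forall_mem_fullCycleType_iff_card_mem_closure, hcard,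
        mul_mem_closure_image_mul_left_iff hℓ.ne']
    _ ↔ ∃ x : Gset k ℓ → ℕ, ∑ᶠ g : Gset k ℓ, (g : ℕ) * x g = c := by
      simp only [mem_closure_iff_exists_finsum_nsmul (finite_Gset hk ℓ), smul_eq_mul, mul_comm]
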